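/- arXiv:1611.00982 — 2 statements merged into one kernel-verified Lean document; each statement's English description precedes it below -/
import Mathlib

section
/- Let M be a 3-spherical Coxeter matrix on a finite index set I, with Coxeter system (W, {s_i : i ∈ I}) and length function ℓ. Let σ : I → I be a bijection with σ ∘ σ = id and M(σ i, σ j) = M(i, j) for all i, j, having no fixed vertices (σ i ≠ i for all i) and no fixed edges (M(i, σ i) = 2 for all i), and let θ : W → W be the group automorphism determined by θ(s_i) = s_{σ i} for all i ∈ I. Then for every u ∈ W with θ(u) = u⁻¹ there exists w ∈ W such that u = w · θ(w)⁻¹ and ℓ(u) = 2 · ℓ(w). In particular, {u ∈ W : θ(u) = u⁻¹} = {w · θ(w)⁻¹ : w ∈ W}. -/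
namespace TwistedInv

open CoxeterSystem

section Cocycle

variable {I W : Type*} [Group W] {M : CoxeterMatrix I} (cs : CoxeterSystem M W)

open Classical in
/-- The signed conjugation action of a simple reflection. -/
noncomputable def act (i : I) : Equiv.Perm (W × ZMod 2) :=
  Function.Involutive.toPerm
    (fun p => (cs.simple i * p.1 * cs.simple i,
      p.2 + if p.1 = cs.simple i then 1 else 0)) (by
    rintro ⟨t, e⟩
    have h : cs.simple i * t * cs.simple i = cs.simple i ↔ t = cs.simple i := by
      constructor
      · intro h
        have := congrArg (fun x => cs.simple i * x * cs.simple i) h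
        simpa [mul_assoc] using this
      · rintro rfl; simp
    ext
    · simp [mul_assoc]
    · simp only [h, add_assoc]
      split_ifs
      · have : (1 : ZMod 2) + 1 = 0 := by decide
        simp [this]
      · simp)

open Classical in
theorem act_apply (i : I) (t : W) (e : ZMod 2) :
    act cs i (t, e) = (cs.simple i * t * cs.simple i,
      e + if t = cs.simple i then 1 else 0) := rfl

theorem act_inv (i : I) : (act cs i)⁻¹ = act cs i := rfl

open Classical in
theorem act_word (ω : List I) (t : W) (e : ZMod 2) :
    (ω.map (act cs)).prod (t, e) =
      (cs.wordProd ω * t * (cs.wordProd ω)⁻¹, e + ((cs.rightInvSeq ω).count t : ZMod 2)) := by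
  induction ω with
  | nil => simp
  | cons i ω ih =>
    have h : (cs.wordProd ω * t * (cs.wordProd ω)⁻¹ = cs.simple i) ↔
        ((cs.wordProd ω)⁻¹ * cs.simple i * cs.wordProd ω = t) := by
      constructor
      · intro h; rw [← h]; group
      · intro h; rw [← h]; group
    rw [List.map_cons, List.prod_cons, Equiv.Perm.mul_apply, ih, act_apply]
    rw [if_congr h rfl rfl]
    simp only [rightInvSeq, List.count_cons, wordProd_cons, beq_iff_eq, mul_inv_rev, inv_simple,
      mul_assoc, Prod.mk.injEq, true_and]
    push_cast
    ring

theorem act_alternating (i j : I) (m : ℕ) :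
    ((alternatingWord i j (2 * m)).map (act cs)).prod = (act cs i * act cs j) ^ m := by
  induction m with
  | zero => simp [alternatingWord]
  | succ m ih =>
    rw [show 2 * (m + 1) = 2 * m + 1 + 1 by ring, alternatingWord_succ, alternatingWord_succ,
      pow_succ, ← ih]
    simp

open Classical in
theorem even_count (i j : I) (t : W) :
    Even ((cs.leftInvSeq (alternatingWord i j (2 * M i j))).count t) := by
  set L := cs.leftInvSeq (alternatingWord i j (2 * M i j)) with hL
  have hlen : L.length = 2 * M i j := by simp [hL]
  have hdrop : L.drop (M i j) = L.take (M i j) := by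
    apply List.ext_getElem
    · simp [hlen]; omega
    · intro k h1 h2
      have hk : k < M i j := by simp [hlen] at h2; omega
      simp only [List.getElem_drop, List.getElem_take, hL]
      rw [getElem_leftInvSeq_alternatingWord cs i j (M i j) _ (by omega),
        getElem_leftInvSeq_alternatingWord cs i j (M i j) _ (by omega),
        prod_alternatingWord_eq_mul_pow, prod_alternatingWord_eq_mul_pow]
      have e1 : (2 * (M i j + k) + 1) / 2 = M i j + k := by omega
      have e2 : (2 * k + 1) / 2 = k := by omega
      rw [e1, e2, pow_add, simple_mul_simple_pow', one_mul]
      simp [parity_simps]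
  rw [← List.take_append_drop (M i j) L, List.count_append, hdrop]
  exact ⟨_, rfl⟩

theorem act_liftable : M.IsLiftable (act cs) := by
  intro i j
  rw [← act_alternating cs i j, ← inv_inj, List.prod_inv_reverse, inv_one]
  have : ((alternatingWord i j (2 * M i j)).map (act cs)).map (fun x => x⁻¹) =
      (alternatingWord i j (2 * M i j)).map (act cs) := by
    simp [act_inv, Function.comp_def]
  rw [this, ← List.map_reverse]
  classical
  ext1 ⟨t, e⟩
  rw [act_word, rightInvSeq_reverse, List.count_reverse]
  have h1 : cs.wordProd (alternatingWord i j (2 * M i j)) = 1 := by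
    rw [prod_alternatingWord_eq_mul_pow]; simp
  have h2 : (((cs.leftInvSeq (alternatingWord i j (2 * M i j))).count t : ℕ) : ZMod 2) = 0 := by
    rw [ZMod.natCast_eq_zero_iff]
    exact (even_count cs i j t).two_dvd
  simp [h1, h2]

/-- The lifted action. -/
noncomputable def actHom : W →* Equiv.Perm (W × ZMod 2) := cs.lift ⟨act cs, act_liftable cs⟩

theorem actHom_simple (i : I) : actHom cs (cs.simple i) = act cs i :=
  cs.lift_apply_simple (act_liftable cs) i

theorem actHom_word (ω : List I) :
    actHom cs (cs.wordProd ω) = (ω.map (act cs)).prod := by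
  simp [wordProd, map_list_prod, Function.comp_def, actHom_simple]

/-- The parity cocycle. -/
noncomputable def eta (w t : W) : ZMod 2 := (actHom cs w (t, 0)).2

open Classical in
theorem eta_word (ω : List I) (t : W) :
    eta cs (cs.wordProd ω) t = ((cs.rightInvSeq ω).count t : ZMod 2) := by
  simp [eta, actHom_word, act_word]

theorem actHom_apply (w t : W) (e : ZMod 2) :
    actHom cs w (t, e) = (w * t * w⁻¹, e + eta cs w t) := by
  classical
  obtain ⟨ω, rfl⟩ := cs.wordProd_surjective w
  rw [eta_word, actHom_word, act_word]

theorem eta_mul (a b t : W) : eta cs (a * b) t = eta cs b t + eta cs a (b * t * b⁻¹) := by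
  conv_lhs => rw [eta, map_mul, Equiv.Perm.mul_apply, actHom_apply, actHom_apply]
  simp

theorem eta_one (t : W) : eta cs 1 t = 0 := by simp [eta]

open Classical in
theorem eta_simple (i : I) (t : W) :
    eta cs (cs.simple i) t = if t = cs.simple i then 1 else 0 := by
  simp [eta, actHom_simple, act_apply]

theorem eta_pos {w : W} {i : I} (h : eta cs w (cs.simple i) ≠ 0) :
    cs.length (w * cs.simple i) < cs.length w := by
  classical
  obtain ⟨ω, hω, rfl⟩ := cs.exists_isReduced w
  rw [eta_word] at h
  have : cs.simple i ∈ cs.rightInvSeq ω := by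
    by_contra hc
    exact h (by simp [List.count_eq_zero_of_not_mem hc])
  exact (cs.isRightInversion_of_mem_rightInvSeq hω this).2

theorem eta_iff (w : W) (i : I) :
    eta cs w (cs.simple i) = 1 ↔ cs.length (w * cs.simple i) < cs.length w := by
  constructor
  · intro h; exact eta_pos cs (by rw [h]; decide)
  · intro h
    by_contra hc
    have h0 : eta cs w (cs.simple i) = 0 := by
      revert hc; generalize eta cs w (cs.simple i) = x; revert x; decide
    have := eta_pos cs (w := w * cs.simple i) (i := i) (by
      rw [eta_mul, eta_simple]; simp [h0])
    simp at this
    omega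

theorem exchange {x : W} {i j : I} (h : cs.length (x * cs.simple j) < cs.length x)
    (hne : cs.simple i * x * cs.simple j ≠ x) :
    cs.length (cs.simple i * x * cs.simple j) < cs.length (cs.simple i * x) := by
  rw [← eta_iff] at h ⊢
  rw [eta_mul, h, eta_simple, if_neg, add_zero]
  intro hc
  apply hne
  rw [mul_inv_eq_iff_eq_mul] at hc
  rw [mul_assoc, hc]; simp

theorem refl_eq {t : W} (ht : cs.IsReflection t) {i : I}
    (hc : t * cs.simple i * t⁻¹ = cs.simple i)
    (h : cs.length (t * cs.simple i) < cs.length t) : t = cs.simple i := by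
  classical
  obtain ⟨w, r, rfl⟩ := ht
  rw [← eta_iff, eta_mul, eta_mul, eta_simple] at h
  have h1 : cs.simple r * (w⁻¹ * cs.simple i * w⁻¹⁻¹) * (cs.simple r)⁻¹
      = w⁻¹ * cs.simple i * w⁻¹⁻¹ := by
    have := congrArg (fun x => w⁻¹ * x * w) hc
    simpa [mul_assoc] using this
  have h2 := eta_mul cs w w⁻¹ (cs.simple i)
  rw [mul_inv_cancel, eta_one] at h2
  rw [h1, add_left_comm, ← h2, add_zero] at h
  have h3 : w⁻¹ * cs.simple i * w⁻¹⁻¹ = cs.simple r := by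
    by_contra hn
    rw [if_neg hn] at h
    exact absurd h (by decide)
  rw [← h3]
  group

end Cocycle

section Geometric

variable {I : Type*} (M : CoxeterMatrix I)

/-- The coroot functional of the geometric representation. -/
noncomputable def coroot (i : I) : Module.Dual ℝ (I →₀ ℝ) :=
  Finsupp.linearCombination ℝ (fun j => -2 * Real.cos (Real.pi / M i j))

theorem coroot_single (i j : I) :
    coroot M i (Finsupp.single j 1) = -2 * Real.cos (Real.pi / M i j) := by
  simp [coroot]

theorem coroot_self (i : I) : coroot M i (Finsupp.single i 1) = 2 := by
  simp [coroot_single]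

/-- The geometric reflection. -/
noncomputable def geo (i : I) : (I →₀ ℝ) ≃ₗ[ℝ] (I →₀ ℝ) := Module.reflection (coroot_self M i)

theorem geo_liftable : M.IsLiftable (geo M) := by
  intro i j
  by_cases hij : i = j
  · subst hij
    rw [M.diagonal, pow_one]
    ext1 v
    exact Module.involutive_reflection (coroot_self M i) v
  have hne1 : M i j ≠ 1 := M.off_diagonal i j hij
  generalize hm : M i j = m at hne1
  have hm' : M j i = m := by rw [M.symmetric, hm]
  have hf : coroot M i (Finsupp.single j 1) = -2 * Real.cos (Real.pi / m) := by
    rw [coroot_single, hm]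
  have hg : coroot M j (Finsupp.single i 1) = -2 * Real.cos (Real.pi / m) := by
    rw [coroot_single, hm']
  rcases Nat.lt_or_ge m 3 with h3 | h3
  · interval_cases m
    · simp
    · exact absurd rfl hne1
    · ext1 z
      have hc : Real.cos (Real.pi / (2 : ℕ)) = 0 := by simp
      rw [hc, mul_zero] at hf hg
      rw [geo, geo, pow_two]
      simp only [LinearEquiv.mul_apply, Module.reflection_apply, map_sub, map_smul, hf, hg,
        coroot_self, LinearEquiv.coe_one, id]
      module
  · set φ : ℝ := 2 * Real.pi / m with hφ
    have hmpos : (0 : ℝ) < m := by positivity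
    have hm3 : (3 : ℝ) ≤ m := by exact_mod_cast h3
    have hsin : Real.sin φ ≠ 0 := by
      apply ne_of_gt
      apply Real.sin_pos_of_pos_of_lt_pi
      · positivity
      · rw [hφ, div_lt_iff₀ hmpos]
        nlinarith [Real.pi_pos]
    have ht : 2 * Real.cos φ = coroot M i (Finsupp.single j 1) * coroot M j (Finsupp.single i 1) - 2 := by
      rw [hf, hg, hφ, mul_div_assoc, Real.cos_two_mul]
      ring
    ext1 z
    rw [geo, geo, Module.reflection_mul_reflection_pow_apply _ _ m z (2 * Real.cos φ) ht]
    have hS := fun n => Polynomial.Chebyshev.S_two_mul_real_cos φ n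
    have hmφ : (m : ℝ) * φ = 2 * Real.pi := by rw [hφ]; field_simp
    rcases Nat.even_or_odd' m with ⟨k, hk | hk⟩
    · have e1 : ((m : ℤ) - 2) / 2 = k - 1 := by omega
      have e2 : ((m : ℤ) - 1) / 2 = k - 1 := by omega
      have hz : (Polynomial.Chebyshev.S ℝ ((k : ℤ) - 1)).eval (2 * Real.cos φ) = 0 := by
        apply (mul_eq_zero.mp _).resolve_right hsin
        rw [hS]
        have : (((k : ℤ) - 1 : ℤ) : ℝ) + 1 = k := by push_cast; ring
        rw [this]
        have : (k : ℝ) * φ = Real.pi := by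
          rw [hk] at hmφ; push_cast at hmφ; linarith
        rw [this, Real.sin_pi]
      rw [e1, e2, hz]
      simp
    · have e1 : ((m : ℤ) - 1) / 2 = k := by omega
      have e2 : ((m : ℤ) - 3) / 2 = k - 1 := by omega
      have e3 : (m : ℤ) / 2 = k := by omega
      have e4 : ((m : ℤ) - 2) / 2 = k - 1 := by omega
      have hz : (Polynomial.Chebyshev.S ℝ (k : ℤ)).eval (2 * Real.cos φ) +
          (Polynomial.Chebyshev.S ℝ ((k : ℤ) - 1)).eval (2 * Real.cos φ) = 0 := by
        apply (mul_eq_zero.mp _).resolve_right hsin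
        rw [add_mul, hS, hS]
        have h1 : (((k : ℤ) - 1 : ℤ) : ℝ) + 1 = k := by push_cast; ring
        have h2 : (((k : ℤ) : ℝ) + 1) * φ = 2 * Real.pi - k * φ := by
          rw [hk] at hmφ; push_cast at hmφ ⊢; linarith
        rw [h1, h2, Real.sin_two_pi_sub]
        ring
      rw [e1, e2, e3, e4, hz]
      simp

theorem simple_ne {W : Type*} [Group W] {M : CoxeterMatrix I} (cs : CoxeterSystem M W)
    {i j : I} (hij : i ≠ j) (h2 : M i j = 2) : cs.simple i ≠ cs.simple j := by
  intro h
  have h1 := congrArg (cs.lift ⟨geo M, geo_liftable M⟩) h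
  rw [cs.lift_apply_simple, cs.lift_apply_simple] at h1
  have h3 := congrArg (fun e => (e (Finsupp.single i 1)) i) h1
  simp only [geo, Module.reflection_apply] at h3
  rw [coroot_self, coroot_single, M.symmetric, h2] at h3
  norm_num at h3

end Geometric

section Main

variable {I W : Type*} [Group W] {M : CoxeterMatrix I} (cs : CoxeterSystem M W)
  {σ : I → I} {θ : W →* W}

theorem theta_theta (hinv : σ ∘ σ = id) (hθ : ∀ i : I, θ (cs.simple i) = cs.simple (σ i))
    (w : W) : θ (θ w) = w := by
  have : θ.comp θ = MonoidHom.id W := by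
    apply cs.ext_simple
    intro i
    simp only [MonoidHom.comp_apply, hθ, MonoidHom.id_apply]
    exact congrArg cs.simple (congrFun hinv i)
  exact DFunLike.congr_fun this w

theorem length_theta_le (hθ : ∀ i : I, θ (cs.simple i) = cs.simple (σ i)) (w : W) :
    cs.length (θ w) ≤ cs.length w := by
  obtain ⟨ω, hω, rfl⟩ := cs.exists_isReduced w
  have : θ (cs.wordProd ω) = cs.wordProd (ω.map σ) := by
    simp [wordProd, map_list_prod, Function.comp_def, hθ]
  rw [this, hω.eq]
  simpa using cs.length_wordProd_le (ω.map σ)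

theorem no_fixed_reflection (hinv : σ ∘ σ = id) (hnovertex : ∀ i : I, σ i ≠ i)
    (hnoedge : ∀ i : I, M i (σ i) = 2)
    (hθ : ∀ i : I, θ (cs.simple i) = cs.simple (σ i)) (n : ℕ) :
    ∀ t : W, cs.length t = n → cs.IsReflection t → θ t ≠ t := by
  induction n using Nat.strong_induction_on with
  | _ n ih =>
  intro t hn ht hfix
  have hθθ := theta_theta cs hinv hθ
  have ht1 : t ≠ 1 := by
    rintro rfl
    have := ht.odd_length
    simp at this
  obtain ⟨i, hi⟩ := cs.exists_rightDescent_of_ne_one ht1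
  have hi : cs.length (t * cs.simple i) < cs.length t := hi
  have hne : cs.simple i ≠ cs.simple (σ i) := simple_ne cs (hnovertex i).symm (hnoedge i)
  have hcomm : cs.simple i * cs.simple (σ i) = cs.simple (σ i) * cs.simple i := by
    have := cs.simple_mul_simple_pow i (σ i)
    rw [hnoedge, pow_two] at this
    have h := eq_inv_of_mul_eq_one_left this
    simpa using h
  have hθ1 : θ (cs.simple i) = cs.simple (σ i) := hθ i
  have hθ2 : θ (cs.simple (σ i)) = cs.simple i := by rw [← hθ1, hθθ]
  have hi' : cs.length (t * cs.simple (σ i)) < cs.length t := by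
    have := length_theta_le cs hθ (t * cs.simple i)
    rw [map_mul, hfix, hθ1] at this
    omega
  have hss := cs.simple_mul_simple_self i
  have hss' := cs.simple_mul_simple_self (σ i)
  have htt := ht.mul_self
  have hinvt := ht.inv
  by_cases hc : t * cs.simple i * t⁻¹ = cs.simple i
  · have := refl_eq cs ht hc hi
    rw [this, hθ1] at hfix
    exact hne hfix.symm
  have hlen : cs.length (cs.simple i * t * cs.simple i) < cs.length t := by
    have h1 := exchange cs (i := i) hi (by
      intro h
      apply hc
      rw [mul_inv_eq_iff_eq_mul]
      conv_rhs => rw [← h]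
      simp [mul_assoc])
    have h2 : cs.length (cs.simple i * t) = cs.length (t * cs.simple i) := by
      rw [← cs.length_inv]; simp [hinvt]
    omega
  have hy : cs.IsReflection (cs.simple i * t * cs.simple i) := by
    simpa using ht.conj (cs.simple i)
  by_cases hd : t * cs.simple i * t⁻¹ = cs.simple (σ i)
  · refine ih _ (hn ▸ hlen) _ rfl hy ?_
    rw [mul_inv_eq_iff_eq_mul] at hd
    have hd' := congrArg θ hd
    simp only [map_mul, hfix, hθ1, hθ2] at hd'
    rw [map_mul, map_mul, hfix, hθ1, mul_assoc, mul_assoc, hd, hd', ← mul_assoc, ← mul_assoc, hcomm]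
  · have hy2 : cs.length (cs.simple i * t * cs.simple i * cs.simple (σ i)) <
        cs.length (cs.simple i * t * cs.simple i) := by
      rw [← eta_iff] at hi' ⊢
      have hconj : cs.simple i * cs.simple (σ i) * (cs.simple i)⁻¹ = cs.simple (σ i) := by
        rw [hcomm]; simp
      rw [eta_mul, hconj, eta_simple, if_neg hne.symm, zero_add, eta_mul, hi', eta_simple, if_neg,
        add_zero]
      intro h
      apply hd
      have := congrArg θ h
      simpa only [map_mul, map_inv, hfix, hθ1, hθ2] using this
    refine ih (cs.length (cs.simple (σ i) * (cs.simple i * t * cs.simple i) * cs.simple (σ i)))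
      ?_ _ rfl (by simpa using hy.conj (cs.simple (σ i))) ?_
    · have h1 := cs.length_mul_le (cs.simple (σ i))
        (cs.simple i * t * cs.simple i * cs.simple (σ i))
      rw [cs.length_simple, ← mul_assoc] at h1
      omega
    · simp only [map_mul, hfix, hθ1, hθ2]
      have e1 : cs.simple i * (cs.simple (σ i) * t * cs.simple (σ i)) * cs.simple i =
          (cs.simple i * cs.simple (σ i)) * t * (cs.simple (σ i) * cs.simple i) := by
        simp only [mul_assoc]
      have e2 : cs.simple (σ i) * (cs.simple i * t * cs.simple i) * cs.simple (σ i) =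
          (cs.simple (σ i) * cs.simple i) * t * (cs.simple i * cs.simple (σ i)) := by
        simp only [mul_assoc]
      rw [e1, e2, hcomm]

theorem main_aux (hinv : σ ∘ σ = id) (hnovertex : ∀ i : I, σ i ≠ i)
    (hnoedge : ∀ i : I, M i (σ i) = 2)
    (hθ : ∀ i : I, θ (cs.simple i) = cs.simple (σ i)) (n : ℕ) :
    ∀ u : W, cs.length u = n → θ u = u⁻¹ →
      ∃ w : W, u = w * (θ w)⁻¹ ∧ cs.length u = 2 * cs.length w := by
  induction n using Nat.strong_induction_on with
  | _ n ih =>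
  intro u hn hu
  have hθθ := theta_theta cs hinv hθ
  by_cases hu1 : u = 1
  · exact ⟨1, by simp [hu1]⟩
  obtain ⟨i, hi⟩ := cs.exists_leftDescent_of_ne_one hu1
  have hi : cs.length (cs.simple i * u) < cs.length u := hi
  have hθ1 : θ (cs.simple i) = cs.simple (σ i) := hθ i
  have hθ2 : θ (cs.simple (σ i)) = cs.simple i := by rw [← hθ1, hθθ]
  have hi' : cs.length (u * cs.simple (σ i)) < cs.length u := by
    have := length_theta_le cs hθ (cs.simple i * u)
    rw [map_mul, hu, hθ1, ← cs.length_inv] at this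
    simp at this
    omega
  by_cases hc : cs.simple i * u * cs.simple (σ i) = u
  · exfalso
    have hc' : u * cs.simple (σ i) = cs.simple i * u := by
      conv_rhs => rw [← hc]
      simp [mul_assoc]
    obtain ⟨w, hw, -⟩ := ih _ (hn ▸ hi) (cs.simple i * u) rfl (by
      rw [← hc', map_mul, hu, hθ2, hc', mul_inv_rev, inv_simple])
    refine no_fixed_reflection cs hinv hnovertex hnoedge hθ _ (w⁻¹ * cs.simple i * w) rfl
      ⟨w⁻¹, i, by simp⟩ ?_
    have h1 : w * (θ w)⁻¹ * cs.simple (σ i) = cs.simple i * (w * (θ w)⁻¹) := by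
      rw [← hw, mul_assoc, hc']
    simp only [map_mul, map_inv, hθ1]
    have h2 := congrArg (fun x => w⁻¹ * x * θ w) h1
    simpa [mul_assoc] using h2
  · have h1 := exchange cs (i := i) hi' hc
    obtain ⟨w, hw, hl⟩ := ih _ (hn ▸ h1.trans hi) (cs.simple i * u * cs.simple (σ i)) rfl (by
      simp [hu, hθ1, hθ2, mul_assoc])
    have hu2 : u = (cs.simple i * w) * (θ (cs.simple i * w))⁻¹ := by
      have := congrArg (fun x => cs.simple i * x * cs.simple (σ i)) hw
      simpa [hθ1, mul_assoc] using this
    refine ⟨cs.simple i * w, hu2, ?_⟩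
    have a1 := cs.length_simple_mul u i
    have a2 := cs.length_mul_simple (cs.simple i * u) (σ i)
    have a3 := cs.length_simple_mul w i
    have a4 := cs.length_mul_le (cs.simple i * w) (θ (cs.simple i * w))⁻¹
    rw [← hu2, cs.length_inv] at a4
    have a5 := length_theta_le cs hθ (cs.simple i * w)
    omega

end Main

end TwistedInv

/-- Let `M` be a 3-spherical Coxeter matrix on a finite index set, `σ` an involutive diagram
automorphism of `M` with no fixed vertices and no fixed edges, and `θ` the induced group
automorphism of the Coxeter group `W` with `θ (s i) = s (σ i)`. Then every `u ∈ W` with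
`θ u = u⁻¹` can be written as `u = w * (θ w)⁻¹` with `ℓ u = 2 * ℓ w`; in particular,
`{u | θ u = u⁻¹} = {w * (θ w)⁻¹ | w ∈ W}`. -/
theorem twisted_involutions_eq_twisted_conjugates
    {I : Type*} [Finite I] {W : Type*} [Group W]
    (M : CoxeterMatrix I) (cs : CoxeterSystem M W)
    (hsph : ∀ J : Finset I, J.card ≤ 3 →
      Finite ↥(Subgroup.closure (cs.simple '' (J : Set I))))
    (σ : I → I) (hbij : Function.Bijective σ)
    (hinv : σ ∘ σ = id)
    (hM : ∀ i j : I, M (σ i) (σ j) = M i j)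
    (hnovertex : ∀ i : I, σ i ≠ i)
    (hnoedge : ∀ i : I, M i (σ i) = 2)
    (θ : W →* W) (hθ : ∀ i : I, θ (cs.simple i) = cs.simple (σ i)) :
    (∀ u : W, θ u = u⁻¹ →
      ∃ w : W, u = w * (θ w)⁻¹ ∧ cs.length u = 2 * cs.length w)
    ∧ {u : W | θ u = u⁻¹} = {u : W | ∃ w : W, u = w * (θ w)⁻¹} := by
  have hmain := fun u hu =>
    TwistedInv.main_aux cs hinv hnovertex hnoedge hθ (cs.length u) u rfl hu
  refine ⟨hmain, ?_⟩
  ext u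
  constructor
  · intro hu
    obtain ⟨w, hw, -⟩ := hmain u hu
    exact ⟨w, hw⟩
  · rintro ⟨w, rfl⟩
    simp [TwistedInv.theta_theta cs hinv hθ]
end

section
/- Let n ≥ 3, let M_n be the Coxeter matrix on an index set I with |I| = n defined by M_n(i,i) = 1 and M_n(i,j) = 4 for all i ≠ j, let W'_n be the associated Coxeter group and ℓ its length function. Then for every real number t with 0 ≤ t ≤ 1/n, the family (t^{ℓ(w)})_{w ∈ W'_n} is summable and Σ_{w ∈ W'_n} t^{ℓ(w)} = 2(1+t)(1+t+t²+t³) / (2(1−(n−1)t)(1+t+t²+t³) + n(n−1)t⁴). -/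
namespace CoxFour

open CoxeterSystem

variable {I : Type*} {W : Type*} [Group W] {M : CoxeterMatrix I}

section
variable (cs : CoxeterSystem M W)

open Classical in
/-- The signed reflection action of a generator. -/
noncomputable def act (i : I) : Function.End (W × ZMod 2) :=
  fun p => (cs.simple i * p.1 * cs.simple i, p.2 + if p.1 = cs.simple i then 1 else 0)

open Classical in
lemma act_word (ω : List I) (p : W × ZMod 2) :
    (ω.map (act cs)).prod p =
      (cs.wordProd ω * p.1 * (cs.wordProd ω)⁻¹,
        p.2 + ((cs.rightInvSeq ω).count p.1 : ZMod 2)) := by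
  induction ω with
  | nil => simp [Function.End.one_def]
  | cons i ω ih =>
    rw [List.map_cons, List.prod_cons]
    change act cs i ((ω.map (act cs)).prod p) = _
    rw [ih]
    simp only [act, rightInvSeq, List.count_cons, wordProd_cons, mul_inv_rev, inv_simple]
    have h : (cs.wordProd ω * p.1 * (cs.wordProd ω)⁻¹ = cs.simple i) ↔
        ((cs.wordProd ω)⁻¹ * cs.simple i * cs.wordProd ω = p.1) := by
      constructor
      · intro h; rw [← h]; group
      · intro h; rw [← h]; group
    ext
    · simp [mul_assoc]
    · by_cases hc : (cs.wordProd ω)⁻¹ * cs.simple i * cs.wordProd ω = p.1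
      · simp [h.2 hc, hc, add_assoc]
      · have := mt h.1 hc
        simp [this, hc]

lemma braid4 {i j : I} (h : M i j = 4) :
    cs.simple j * (cs.simple i * (cs.simple j * cs.simple i)) =
      cs.simple i * (cs.simple j * (cs.simple i * cs.simple j)) := by
  have h1 := cs.simple_mul_simple_pow i j
  rw [h] at h1
  have h2 : (cs.simple i * cs.simple j) ^ 2 = ((cs.simple i * cs.simple j) ^ 2)⁻¹ := by
    rw [eq_inv_iff_mul_eq_one, ← pow_add]; exact h1
  simpa [pow_two, mul_assoc] using h2.symm

lemma braid4' {i j : I} (h : M i j = 4) (x : W) :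
    cs.simple j * (cs.simple i * (cs.simple j * (cs.simple i * x))) =
      cs.simple i * (cs.simple j * (cs.simple i * (cs.simple j * x))) := by
  have := congrArg (· * x) (braid4 cs h)
  simpa [mul_assoc] using this

lemma act_liftable (hM : ∀ i j : I, i ≠ j → M i j = 4) : M.IsLiftable (act cs) := by
  classical
  intro i j
  by_cases hij : i = j
  · subst hij
    rw [M.diagonal, pow_one]
    have : act cs i * act cs i = ([i, i].map (act cs)).prod := by simp
    rw [this]
    funext p
    rw [act_word]
    simp [rightInvSeq, wordProd_cons, Function.End.one_def, List.count_cons]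
    have h2 : ∀ c : ZMod 2, c + c = 0 := by decide
    simp [h2]
  · have h4 := hM i j hij
    rw [h4]
    have : (act cs i * act cs j) ^ 4 = ([i, j, i, j, i, j, i, j].map (act cs)).prod := by
      simp [pow_succ, mul_assoc]
    rw [this]
    funext p
    rw [act_word]
    have hc : ∀ a b c d : ZMod 2, a + b + c + d + a + b + c + d = 0 := by decide
    simp [rightInvSeq, wordProd_cons, Function.End.one_def, List.count_cons, mul_assoc,
      braid4 cs h4, braid4' cs h4, hc]

/-- The lifted action. -/
noncomputable def Phi (hM : ∀ i j : I, i ≠ j → M i j = 4) : W →* Function.End (W × ZMod 2) :=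
  cs.lift ⟨act cs, act_liftable cs hM⟩

lemma Phi_word (hM : ∀ i j : I, i ≠ j → M i j = 4) (ω : List I) :
    Phi cs hM (cs.wordProd ω) = (ω.map (act cs)).prod := by
  induction ω with
  | nil => simp
  | cons i ω ih =>
    rw [wordProd_cons, map_mul, ih]
    simp [Phi, lift_apply_simple]

/-- Parity of the number of times `t` occurs in an inversion sequence of `w`. -/
noncomputable def eta (hM : ∀ i j : I, i ≠ j → M i j = 4) (w t : W) : ZMod 2 :=
  (Phi cs hM w (t, 0)).2

open Classical in
lemma eta_word (hM : ∀ i j : I, i ≠ j → M i j = 4) (ω : List I) (t : W) :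
    eta cs hM (cs.wordProd ω) t = ((cs.rightInvSeq ω).count t : ZMod 2) := by
  rw [eta, Phi_word, act_word]; simp

open Classical in
lemma eta_mul (hM : ∀ i j : I, i ≠ j → M i j = 4) (w : W) (i : I) (t : W) :
    eta cs hM (w * cs.simple i) t =
      (if t = cs.simple i then 1 else 0) + eta cs hM w (cs.simple i * t * cs.simple i) := by
  obtain ⟨ω, rfl⟩ := cs.wordProd_surjective w
  rw [← wordProd_concat, eta_word, eta_word, List.concat_eq_append, ← List.concat_eq_append,
    rightInvSeq_concat]
  rw [List.concat_eq_append, List.count_append, add_comm]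
  have h : t = (MulAut.conj (cs.simple i)) (cs.simple i * t * cs.simple i) := by
    simp [mul_assoc]
  conv_lhs => rw [h]
  rw [List.count_map_of_injective _ _ (MulAut.conj (cs.simple i)).injective]
  rw [← h]
  by_cases hc : t = cs.simple i
  · simp [hc]
  · simp [hc, Ne.symm hc]

lemma lt_of_eta (hM : ∀ i j : I, i ≠ j → M i j = 4) {w t : W} (h : eta cs hM w t = 1) :
    cs.length (w * t) < cs.length w := by
  classical
  obtain ⟨ω, hω, rfl⟩ := cs.exists_isReduced w
  refine (cs.isRightInversion_of_mem_rightInvSeq hω ?_).2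
  rw [eta_word] at h
  by_contra hc
  rw [List.count_eq_zero_of_not_mem hc] at h
  simp at h

lemma zmod2 (a : ZMod 2) : a = 0 ∨ a = 1 := by revert a; decide

lemma desc_iff (hM : ∀ i j : I, i ≠ j → M i j = 4) (w : W) (i : I) :
    cs.IsRightDescent w i ↔ eta cs hM w (cs.simple i) = 1 := by
  constructor
  · intro h
    rcases zmod2 (eta cs hM w (cs.simple i)) with h0 | h1
    · exfalso
      have := lt_of_eta cs hM (w := w * cs.simple i) (t := cs.simple i)
        (by rw [eta_mul]; simp [h0])
      simp at this
      unfold IsRightDescent at h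
      omega
    · exact h1
  · exact lt_of_eta cs hM

/-- The four distinctness facts. -/
lemma simple_ne (hM : ∀ i j : I, i ≠ j → M i j = 4) {i j : I} (hij : i ≠ j) :
    cs.simple i ≠ cs.simple j ∧ cs.simple i ≠ cs.simple j * cs.simple i * cs.simple j ∧
    cs.simple j ≠ cs.simple j * cs.simple i * cs.simple j := by
  classical
  let f : I → DihedralGroup 4 := fun k => if k = i then .sr 0 else if k = j then .sr 1 else 1
  have hf : M.IsLiftable f := by
    intro a b
    by_cases hab : a = b
    · subst hab
      rw [M.diagonal]
      simp only [f]
      split_ifs <;> decide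
    · rw [hM a b hab]
      simp only [f]
      split_ifs <;> decide
  have hi : cs.lift ⟨f, hf⟩ (cs.simple i) = .sr 0 := by
    rw [lift_apply_simple]; simp [f]
  have hj : cs.lift ⟨f, hf⟩ (cs.simple j) = .sr 1 := by
    rw [lift_apply_simple]; simp [f, hij.symm]
  refine ⟨fun h => ?_, fun h => ?_, fun h => ?_⟩ <;>
  · have := congrArg (cs.lift ⟨f, hf⟩) h
    simp only [map_mul, hi, hj] at this
    revert this
    decide

/-- Dihedral state of `w`. -/
noncomputable def st (hM : ∀ i j : I, i ≠ j → M i j = 4) (i j : I) (w : W) :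
    ZMod 2 × ZMod 2 × ZMod 2 × ZMod 2 :=
  (eta cs hM w (cs.simple i), eta cs hM w (cs.simple j),
    eta cs hM w (cs.simple i * cs.simple j * cs.simple i),
    eta cs hM w (cs.simple j * cs.simple i * cs.simple j))

/-- Transition. -/
def tri (x : ZMod 2 × ZMod 2 × ZMod 2 × ZMod 2) : ZMod 2 × ZMod 2 × ZMod 2 × ZMod 2 :=
  (1 + x.1, x.2.2.1, x.2.1, x.2.2.2)

/-- Transition. -/
def trj (x : ZMod 2 × ZMod 2 × ZMod 2 × ZMod 2) : ZMod 2 × ZMod 2 × ZMod 2 × ZMod 2 :=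
  (x.2.2.2, 1 + x.2.1, x.2.2.1, x.1)

lemma st_i (hM : ∀ i j : I, i ≠ j → M i j = 4) {i j : I} (hij : i ≠ j) (w : W) :
    st cs hM i j (w * cs.simple i) = tri (st cs hM i j w) := by
  obtain ⟨h1, h2, h3⟩ := simple_ne cs hM hij
  obtain ⟨h1', h2', h3'⟩ := simple_ne cs hM hij.symm
  simp only [st, tri, eta_mul]
  rw [if_pos trivial, if_neg h1', if_neg h3'.symm, if_neg h2.symm]
  have hb := braid4 cs (hM i j hij)
  have : cs.simple i * (cs.simple j * cs.simple i * cs.simple j) * cs.simple i =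
    cs.simple j * cs.simple i * cs.simple j := by
    simp only [mul_assoc, hb, simple_mul_simple_cancel_left]
  rw [this]
  simp [mul_assoc]

lemma st_j (hM : ∀ i j : I, i ≠ j → M i j = 4) {i j : I} (hij : i ≠ j) (w : W) :
    st cs hM i j (w * cs.simple j) = trj (st cs hM i j w) := by
  have := st_i cs hM hij.symm w
  simp only [st, tri, trj, Prod.mk.injEq] at this ⊢
  tauto

/-- The orbit of zero. -/
def good : List (ZMod 2 × ZMod 2 × ZMod 2 × ZMod 2) :=
  [(0,0,0,0), (1,0,0,0), (0,1,0,1), (1,0,1,1), (1,1,1,1), (0,1,0,0), (1,0,1,0), (0,1,1,1)]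

lemma st_good (hM : ∀ i j : I, i ≠ j → M i j = 4) {i j : I} (hij : i ≠ j) (w : W) :
    st cs hM i j w ∈ good := by
  induction hn : cs.length w using Nat.strong_induction_on generalizing w with
  | _ n ih =>
  subst hn
  have gi : ∀ x, tri x ∈ good → x ∈ good := by decide
  have gj : ∀ x, trj x ∈ good → x ∈ good := by decide
  rcases zmod2 (eta cs hM w (cs.simple i)) with ha | ha
  swap
  · have := ih _ (lt_of_eta cs hM ha) _ rfl
    rw [st_i cs hM hij] at this
    exact gi _ this
  rcases zmod2 (eta cs hM w (cs.simple j)) with hb | hb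
  swap
  · have := ih _ (lt_of_eta cs hM hb) _ rfl
    rw [st_j cs hM hij] at this
    exact gj _ this
  rcases zmod2 (eta cs hM w (cs.simple i * cs.simple j * cs.simple i)) with hc | hc
  swap
  · have := ih _ (lt_of_eta cs hM hc) _ rfl
    rw [← mul_assoc, ← mul_assoc, st_i cs hM hij, st_j cs hM hij, st_i cs hM hij] at this
    exact gi _ (gj _ (gi _ this))
  rcases zmod2 (eta cs hM w (cs.simple j * cs.simple i * cs.simple j)) with hd | hd
  swap
  · have := ih _ (lt_of_eta cs hM hd) _ rfl
    rw [← mul_assoc, ← mul_assoc, st_j cs hM hij, st_i cs hM hij, st_j cs hM hij] at this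
    exact gj _ (gi _ (gj _ this))
  simp [st, ha, hb, hc, hd, good]

lemma desc_i (hM : ∀ i j : I, i ≠ j → M i j = 4) (i j : I) (w : W) :
    cs.IsRightDescent w i ↔ (st cs hM i j w).1 = 1 := desc_iff cs hM w i

lemma desc_j (hM : ∀ i j : I, i ≠ j → M i j = 4) (i j : I) (w : W) :
    cs.IsRightDescent w j ↔ (st cs hM i j w).2.1 = 1 := desc_iff cs hM w j

lemma two_desc (hM : ∀ i j : I, i ≠ j → M i j = 4) {i j : I} (hij : i ≠ j) {w : W}
    (hi : cs.IsRightDescent w i) (hj : cs.IsRightDescent w j) :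
    cs.IsRightDescent (w * cs.simple i) j ∧
    cs.IsRightDescent (w * cs.simple i * cs.simple j) i := by
  rw [desc_i cs hM i j] at hi ⊢
  rw [desc_j cs hM i j] at hj ⊢
  rw [st_j cs hM hij, st_i cs hM hij]
  have := st_good cs hM hij w
  generalize st cs hM i j w = x at *
  revert x
  decide

lemma flip (hM : ∀ i j : I, i ≠ j → M i j = 4) {i j : I} (hij : i ≠ j) {w : W}
    (hi : ¬ cs.IsRightDescent w i) (hj : ¬ cs.IsRightDescent w j) :
    cs.length (w * cs.simple i * cs.simple j * cs.simple i * cs.simple j) = cs.length w + 4 := by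
  have h2 : ¬ cs.IsRightDescent (w * cs.simple i) j ∧
      ¬ cs.IsRightDescent (w * cs.simple i * cs.simple j) i ∧
      ¬ cs.IsRightDescent (w * cs.simple i * cs.simple j * cs.simple i) j := by
    rw [desc_i cs hM i j] at hi ⊢
    rw [desc_j cs hM i j] at hj
    rw [desc_j cs hM i j, desc_j cs hM i j]
    simp only [st_j cs hM hij, st_i cs hM hij]
    have := st_good cs hM hij w
    generalize st cs hM i j w = x at *
    revert x
    decide
  obtain ⟨a, b, c⟩ := h2
  rw [not_isRightDescent_iff] at *
  omega

lemma flip_desc (hM : ∀ i j : I, i ≠ j → M i j = 4) {i j : I} (hij : i ≠ j) (w : W) :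
    (cs.IsRightDescent (w * cs.simple i * cs.simple j * cs.simple i * cs.simple j) i ∧
     cs.IsRightDescent (w * cs.simple i * cs.simple j * cs.simple i * cs.simple j) j) ↔
    (¬ cs.IsRightDescent w i ∧ ¬ cs.IsRightDescent w j) := by
  simp only [desc_i cs hM i j, desc_j cs hM i j, st_j cs hM hij, st_i cs hM hij]
  generalize st cs hM i j w = x
  revert x
  decide

lemma no_chain (hM : ∀ i j : I, i ≠ j → M i j = 4) (w : W) (a b c : I) (hab : a ≠ b)
    (hbc : b ≠ c) (hca : c ≠ a) (h1 : cs.IsRightDescent w a) (h2 : cs.IsRightDescent w b)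
    (h3 : cs.IsRightDescent (w * cs.simple a) c) : False := by
  induction hn : cs.length w using Nat.strong_induction_on generalizing w a b c with
  | _ n ih =>
  subst hn
  obtain ⟨h4, h5⟩ := two_desc cs hM hab h1 h2
  exact ih _ h1 (w * cs.simple a) b c a hbc hca hab h4 h3 h5 rfl

lemma no_three (hM : ∀ i j : I, i ≠ j → M i j = 4) (w : W) (a b c : I) (hab : a ≠ b)
    (hbc : b ≠ c) (hca : c ≠ a) (h1 : cs.IsRightDescent w a) (h2 : cs.IsRightDescent w b)
    (h3 : cs.IsRightDescent w c) : False :=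
  no_chain cs hM w a b c hab hbc hca h1 h2 (two_desc cs hM hca.symm h1 h3).1


lemma sum_bound [Fintype I] (hI : 3 ≤ Fintype.card I) (t : ℝ) (ht0 : 0 ≤ t)
    (ht1 : ((Fintype.card I : ℝ) - 1) * t < 1) (N : ℕ) :
    ∀ s : Finset W, (∀ w ∈ s, cs.length w ≤ N) →
      ∑ w ∈ s, t ^ cs.length w ≤ (1 + t) / (1 - ((Fintype.card I : ℝ) - 1) * t) := by
  classical
  have hI' : (3 : ℝ) ≤ Fintype.card I := by exact_mod_cast hI
  set n : ℝ := (Fintype.card I : ℝ) with hn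
  set C : ℝ := (1 + t) / (1 - (n - 1) * t) with hC
  have hpos : 0 < 1 - (n - 1) * t := by linarith
  have hCeq : C = 1 + n * t + (n - 1) * t * (C - 1) := by
    have h : C * (1 - (n - 1) * t) = 1 + t := by
      rw [hC]; exact div_mul_cancel₀ _ hpos.ne'
    linear_combination h
  have hC1 : 1 ≤ C := by
    rw [hC, le_div_iff₀ hpos]; nlinarith
  induction N with
  | zero =>
    intro s hs
    have : s ⊆ {1} := by
      intro w hw
      have := hs w hw
      rw [Nat.le_zero, length_eq_zero_iff] at this
      simp [this]
    calc _ ≤ ∑ w ∈ ({1} : Finset W), t ^ cs.length w :=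
          Finset.sum_le_sum_of_subset_of_nonneg this (fun _ _ _ => by positivity)
      _ ≤ C := by simpa using hC1
  | succ N ih =>
    intro s hs
    have hd : ∀ w : W, ∃ p : W × I, w ≠ 1 → (p.1 * cs.simple p.2 = w ∧
        cs.length p.1 + 1 = cs.length w) := by
      intro w
      by_cases hw : w = 1
      · have : Nonempty I := Fintype.card_pos_iff.1 (by omega)
        exact ⟨(1, Classical.arbitrary I), fun h => absurd hw h⟩
      · obtain ⟨i, hi⟩ := cs.exists_rightDescent_of_ne_one hw
        exact ⟨(w * cs.simple i, i), fun _ => ⟨by simp, (cs.isRightDescent_iff).1 hi⟩⟩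
    choose g hg using hd
    set s0 := s.erase 1 with hs0
    set s' : Finset W := insert 1 (s0.image (fun w => (g w).1)) with hs'
    have hb' : ∑ w ∈ s', t ^ cs.length w ≤ C := by
      apply ih
      intro w hw
      simp only [hs', Finset.mem_insert, Finset.mem_image] at hw
      rcases hw with rfl | ⟨v, hv, rfl⟩
      · simp
      · rw [hs0, Finset.mem_erase] at hv
        have := (hg v hv.1).2
        have := hs v hv.2
        omega
    have hinj : Set.InjOn g s0 := by
      intro v hv w hw h
      have hv1 : v ≠ 1 := (Finset.mem_erase.1 hv).1
      have hw1 : w ≠ 1 := (Finset.mem_erase.1 hw).1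
      rw [← (hg v hv1).1, ← (hg w hw1).1, h]
    have h1 : ∑ w ∈ s0, t ^ cs.length w =
        ∑ p ∈ s0.image g, t * t ^ cs.length p.1 := by
      rw [Finset.sum_image hinj]
      refine Finset.sum_congr rfl fun w hw => ?_
      rw [← (hg w (Finset.mem_erase.1 hw).1).2, pow_succ, mul_comm]
    have h2 : ∑ p ∈ s0.image g, t * t ^ cs.length p.1 ≤
        ∑ p ∈ (s' ×ˢ (Finset.univ : Finset I)) with ¬ cs.IsRightDescent p.1 p.2,
          t * t ^ cs.length p.1 := by
      refine Finset.sum_le_sum_of_subset_of_nonneg ?_ (fun _ _ _ => by positivity)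
      intro p hp
      obtain ⟨w, hw, rfl⟩ := Finset.mem_image.1 hp
      have := hg w (Finset.mem_erase.1 hw).1
      simp only [Finset.mem_filter, Finset.mem_product, Finset.mem_univ, and_true, hs',
        Finset.mem_insert, Finset.mem_image]
      refine ⟨Or.inr ⟨w, hw, rfl⟩, ?_⟩
      rw [not_isRightDescent_iff, this.1, this.2]
    have h3 : ∑ p ∈ (s' ×ˢ (Finset.univ : Finset I)) with ¬ cs.IsRightDescent p.1 p.2,
          t * t ^ cs.length p.1 ≤
        ∑ v ∈ s', (if v = 1 then n * t else (n - 1) * t * t ^ cs.length v) := by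
      rw [Finset.sum_filter, Finset.sum_product]
      refine Finset.sum_le_sum fun v _ => ?_
      rw [← Finset.sum_filter]
      dsimp only
      rw [Finset.sum_const, nsmul_eq_mul]
      split_ifs with hv
      · subst hv
        simp [not_isRightDescent_one, hn]
      · obtain ⟨i, hi⟩ := cs.exists_rightDescent_of_ne_one hv
        have hcard : (Finset.univ.filter (fun j => ¬ cs.IsRightDescent v j)).card + 1 ≤
            Fintype.card I := by
          have : (Finset.univ.filter (fun j => ¬ cs.IsRightDescent v j)) ⊆
              Finset.univ.erase i := by
            intro j hj
            simp only [Finset.mem_filter, Finset.mem_univ, true_and] at hj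
            simp only [Finset.mem_erase, Finset.mem_univ, and_true]
            rintro rfl
            exact hj hi
          have := Finset.card_le_card this
          rw [Finset.card_erase_of_mem (Finset.mem_univ _), Finset.card_univ] at this
          omega
        have hcard' : ((Finset.univ.filter (fun j => ¬ cs.IsRightDescent v j)).card : ℝ) ≤
            n - 1 := by
          have : ((Finset.univ.filter (fun j => ¬ cs.IsRightDescent v j)).card : ℝ) + 1 ≤ n := by
            rw [hn]; exact_mod_cast hcard
          linarith
        rw [mul_assoc]
        exact mul_le_mul_of_nonneg_right hcard' (by positivity)
    have hmem : (1 : W) ∈ s' := Finset.mem_insert_self _ _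
    have h4 : ∑ v ∈ s', (if v = 1 then n * t else (n - 1) * t * t ^ cs.length v) =
        n * t + (n - 1) * t * (∑ w ∈ s', t ^ cs.length w - 1) := by
      rw [← Finset.add_sum_erase _ _ hmem, ← Finset.add_sum_erase s' _ hmem]
      simp only [length_one, pow_zero, if_true, add_sub_cancel_left, Finset.mul_sum]
      congr 1
      refine Finset.sum_congr rfl fun v hv => ?_
      rw [if_neg (Finset.mem_erase.1 hv).1]
    have h5 : ∑ w ∈ s, t ^ cs.length w ≤ 1 + ∑ w ∈ s0, t ^ cs.length w := by
      by_cases h : (1 : W) ∈ s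
      · rw [← Finset.add_sum_erase _ _ h]; simp [hs0]
      · rw [hs0, Finset.erase_eq_of_notMem h]; linarith
    have h6 : (n - 1) * t * (∑ w ∈ s', t ^ cs.length w - 1) ≤ (n - 1) * t * (C - 1) := by
      apply mul_le_mul_of_nonneg_left
      · linarith
      · exact mul_nonneg (by linarith) ht0
    linarith

lemma summable_pow [Fintype I] (hI : 3 ≤ Fintype.card I) (t : ℝ) (ht0 : 0 ≤ t)
    (ht1 : ((Fintype.card I : ℝ) - 1) * t < 1) : Summable (fun w : W => t ^ cs.length w) := by
  classical
  refine summable_of_sum_le (fun w => by positivity) (fun s => ?_)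
    (c := (1 + t) / (1 - ((Fintype.card I : ℝ) - 1) * t))
  exact sum_bound cs hI t ht0 ht1 (s.sup cs.length) s (fun w hw => Finset.le_sup hw)

open Classical in
/-- Indicator of a right descent. -/
noncomputable def chi (i : I) (w : W) : ℝ := if cs.IsRightDescent w i then 1 else 0

lemma summable_chi {f : W → ℝ} (hf : Summable f) (hf0 : ∀ w, 0 ≤ f w) (i : I) :
    Summable (fun w => chi cs i w * f w) := by
  refine Summable.of_nonneg_of_le (fun w => ?_) (fun w => ?_) hf
  · unfold chi; split_ifs <;> simp [hf0]
  · unfold chi; split_ifs <;> simp [hf0]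

lemma tsum_one {t : ℝ} (ht0 : 0 ≤ t) (hs : Summable (fun w : W => t ^ cs.length w)) (i : I) :
    ∑' w, chi cs i w * t ^ cs.length w =
      t * (∑' w, t ^ cs.length w - ∑' w, chi cs i w * t ^ cs.length w) := by
  rw [← hs.tsum_sub (summable_chi cs hs (fun w => by positivity) i), ← tsum_mul_left,
    ← (Equiv.mulRight (cs.simple i)).tsum_eq]
  refine tsum_congr fun w => ?_
  simp only [Equiv.coe_mulRight, chi]
  by_cases h : cs.IsRightDescent w i
  · have h' := (cs.isRightDescent_iff_not_isRightDescent_mul).1 h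
    simp [h, h']
  · have h1 : cs.IsRightDescent (w * cs.simple i) i := by
      rw [cs.isRightDescent_iff_not_isRightDescent_mul]; simpa using h
    rw [cs.not_isRightDescent_iff] at h
    have h2 : ¬ cs.IsRightDescent w i := by rw [cs.not_isRightDescent_iff]; exact h
    simp only [h1, h2, if_true, if_false, h, pow_succ]
    ring

lemma tsum_two (hM : ∀ i j : I, i ≠ j → M i j = 4) {t : ℝ} (ht0 : 0 ≤ t)
    (hs : Summable (fun w : W => t ^ cs.length w)) {i j : I} (hij : i ≠ j) :
    ∑' w, chi cs i w * (chi cs j w * t ^ cs.length w) =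
      t ^ 4 * (∑' w, t ^ cs.length w - ∑' w, chi cs i w * t ^ cs.length w
        - ∑' w, chi cs j w * t ^ cs.length w
        + ∑' w, chi cs i w * (chi cs j w * t ^ cs.length w)) := by
  have f0 : ∀ w, 0 ≤ t ^ cs.length w := fun w => by positivity
  have c0 : ∀ w, 0 ≤ chi cs j w * t ^ cs.length w := fun w => by
    unfold chi; split_ifs <;> simp [f0]
  have si := summable_chi cs hs f0 i
  have sj := summable_chi cs hs f0 j
  have sij := summable_chi cs sj c0 i
  rw [← hs.tsum_sub si, ← (hs.sub si).tsum_sub sj, ← ((hs.sub si).sub sj).tsum_add sij,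
    ← tsum_mul_left, ← (Equiv.mulRight (cs.simple i * cs.simple j * cs.simple i *
      cs.simple j)).tsum_eq]
  refine tsum_congr fun w => ?_
  simp only [Equiv.coe_mulRight, ← mul_assoc]
  have hfd := flip_desc cs hM hij w
  by_cases h : ¬ cs.IsRightDescent w i ∧ ¬ cs.IsRightDescent w j
  · have h' := hfd.2 h
    simp only [chi, h'.1, h'.2, h.1, h.2, if_true, if_false, flip cs hM hij h.1 h.2, pow_add]
    ring
  · have h' := mt hfd.1 h
    have e1 : chi cs i (w * cs.simple i * cs.simple j * cs.simple i * cs.simple j) *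
        chi cs j (w * cs.simple i * cs.simple j * cs.simple i * cs.simple j) = 0 := by
      unfold chi
      split_ifs <;> simp_all
    have e2 : (1 - chi cs i w) * (1 - chi cs j w) = 0 := by
      unfold chi
      split_ifs <;> simp_all
    rw [e1]
    linear_combination (-(t ^ 4 * t ^ cs.length w)) * e2

open Classical in
lemma pointwise [Fintype I] (hM : ∀ i j : I, i ≠ j → M i j = 4) (w : W) :
    (1 : ℝ) = (if w = 1 then 1 else 0) + ∑ i, chi cs i w
      - (1 / 2) * ∑ p ∈ (Finset.univ : Finset I).offDiag, chi cs p.1 w * chi cs p.2 w := by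
  set d : Finset I := Finset.univ.filter (fun i => cs.IsRightDescent w i) with hd
  have h1 : ∑ i, chi cs i w = d.card := by
    simp [chi, hd]
  have h2 : ∑ p ∈ (Finset.univ : Finset I).offDiag, chi cs p.1 w * chi cs p.2 w =
      (d.offDiag.card : ℝ) := by
    have : d.offDiag = (Finset.univ : Finset I).offDiag.filter
        (fun p => cs.IsRightDescent w p.1 ∧ cs.IsRightDescent w p.2) := by
      ext p; simp [hd]; tauto
    rw [this, Finset.card_filter]
    push_cast
    refine Finset.sum_congr rfl fun p _ => ?_
    unfold chi
    split_ifs <;> simp_all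
  rw [h1, h2, Finset.offDiag_card]
  have h3 : d.card ≤ 2 := by
    by_contra hc
    obtain ⟨a, b, c, ha, hb, hc, hab, hac, hbc⟩ := Finset.two_lt_card_iff.1 (not_le.1 hc)
    simp only [hd, Finset.mem_filter, Finset.mem_univ, true_and] at ha hb hc
    exact no_three cs hM w a b c hab hbc hac.symm ha hb hc
  have h4 : d.card = 0 ↔ w = 1 := by
    constructor
    · intro h
      by_contra hw
      obtain ⟨i, hi⟩ := cs.exists_rightDescent_of_ne_one hw
      rw [Finset.card_eq_zero] at h
      have : i ∈ d := by simp [hd, hi]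
      simp [h] at this
    · rintro rfl
      simp [hd, not_isRightDescent_one]
  by_cases hw : w = 1
  · simp [h4.2 hw, hw]
  · have := mt h4.1 hw
    have h5 : d.card = 1 ∨ d.card = 2 := by omega
    rcases h5 with h5 | h5 <;> rw [h5] <;> norm_num [hw]

lemma tsum_all [Fintype I] (hM : ∀ i j : I, i ≠ j → M i j = 4) {t : ℝ} (ht0 : 0 ≤ t)
    (ht : 0 < 1 + t) (hs : Summable (fun w : W => t ^ cs.length w)) (A B : ℝ)
    (hA : ∀ i, ∑' w, chi cs i w * t ^ cs.length w = A)
    (hB : ∀ i j, i ≠ j → ∑' w, chi cs i w * (chi cs j w * t ^ cs.length w) = B) :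
    ∑' w, t ^ cs.length w = 1 + Fintype.card I * A
      - (1 / 2) * ((Fintype.card I * Fintype.card I - Fintype.card I) * B) := by
  classical
  have f0 : ∀ w, 0 ≤ t ^ cs.length w := fun w => by positivity
  have c0 : ∀ j w, 0 ≤ chi cs j w * t ^ cs.length w := fun j w => by
    unfold chi; split_ifs <;> simp [f0]
  have si : ∀ i, HasSum (fun w => chi cs i w * t ^ cs.length w) A := fun i => by
    rw [← hA i]; exact (summable_chi cs hs f0 i).hasSum
  have sij : ∀ p ∈ (Finset.univ : Finset I).offDiag,
      HasSum (fun w => chi cs p.1 w * (chi cs p.2 w * t ^ cs.length w)) B := fun p hp => by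
    rw [← hB p.1 p.2 (Finset.mem_offDiag.1 hp).2.2]
    exact (summable_chi cs (si p.2).summable (c0 p.2) p.1).hasSum
  have s1 : HasSum (fun w : W => if w = 1 then (1 : ℝ) else 0) 1 := by
    simpa using hasSum_ite_eq (1 : W) (1 : ℝ)
  have key := (s1.add (hasSum_sum (s := Finset.univ) fun i _ => si i)).sub
    ((hasSum_sum sij).mul_left (1 / 2))
  have e : (fun w : W => t ^ cs.length w) = fun w => ((if w = 1 then (1 : ℝ) else 0) +
      ∑ i, chi cs i w * t ^ cs.length w) - (1 / 2) *
      ∑ p ∈ (Finset.univ : Finset I).offDiag,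
        chi cs p.1 w * (chi cs p.2 w * t ^ cs.length w) := by
    funext w
    have h := congrArg (· * t ^ cs.length w) (pointwise cs hM w)
    simp only [one_mul, sub_mul, add_mul, Finset.sum_mul, mul_assoc] at h
    by_cases hw : w = 1
    · simpa [hw] using h
    · simpa [hw] using h
  rw [e, key.tsum_eq]
  have hc : ((Finset.univ : Finset I).offDiag.card : ℝ) =
      Fintype.card I * Fintype.card I - Fintype.card I := by
    rw [Finset.offDiag_card, Finset.card_univ, Nat.cast_sub (Nat.le_mul_self _), Nat.cast_mul]
  simp only [Finset.sum_const, nsmul_eq_mul, hc, Finset.card_univ]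

end
end CoxFour

/-- Let `n ≥ 3` and let `M` be the Coxeter matrix on an `n`-element index set whose diagram
is the complete graph with all edges labeled `4`, with Coxeter group `W` and length function
`ℓ`. Then for every real `t` with `0 ≤ t ≤ 1/n`, the family `(t ^ ℓ w)_{w ∈ W}` is summable
and the Poincaré series evaluates to
`2(1+t)(1+t+t²+t³) / (2(1−(n−1)t)(1+t+t²+t³) + n(n−1)t⁴)`. -/
theorem poincare_series_value_complete_graph_four
    {I : Type*} [Fintype I] {n : ℕ} (hn : 3 ≤ n) (hcard : Fintype.card I = n)
    {W : Type*} [Group W]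
    (M : CoxeterMatrix I) (hM : ∀ i j : I, i ≠ j → M i j = 4)
    (cs : CoxeterSystem M W)
    (t : ℝ) (ht0 : 0 ≤ t) (ht1 : t ≤ 1 / n) :
    Summable (fun w : W => t ^ cs.length w) ∧
    ∑' w : W, t ^ cs.length w =
      2 * (1 + t) * (1 + t + t ^ 2 + t ^ 3) /
        (2 * (1 - ((n : ℝ) - 1) * t) * (1 + t + t ^ 2 + t ^ 3)
          + (n : ℝ) * ((n : ℝ) - 1) * t ^ 4) := by
  have hn' : (3 : ℝ) ≤ n := by exact_mod_cast hn
  have htn : (n : ℝ) * t ≤ 1 := by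
    rw [le_div_iff₀ (by linarith)] at ht1; linarith
  have hlt : ((n : ℝ) - 1) * t < 1 := by
    rcases ht0.eq_or_lt with h | h
    · rw [← h]; simp
    · linarith
  have hs := CoxFour.summable_pow cs (by omega) t ht0 (by rw [hcard]; exact hlt)
  refine ⟨hs, ?_⟩
  have h1t : 0 < 1 + t := by linarith
  have hq : 0 < 1 + t + t ^ 2 + t ^ 3 := by positivity
  have hA : ∀ i, ∑' w, CoxFour.chi cs i w * t ^ cs.length w =
      t / (1 + t) * ∑' w, t ^ cs.length w := by
    intro i
    have := CoxFour.tsum_one cs ht0 hs i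
    field_simp
    linarith
  have ht11 : t < 1 := by nlinarith
  have hB : ∀ i j, i ≠ j → ∑' w, CoxFour.chi cs i w * (CoxFour.chi cs j w * t ^ cs.length w) =
      t ^ 4 / ((1 + t) * (1 + t + t ^ 2 + t ^ 3)) * ∑' w, t ^ cs.length w := by
    intro i j hij
    have := CoxFour.tsum_two cs hM ht0 hs hij
    rw [hA i, hA j] at this
    generalize ∑' w, CoxFour.chi cs i w * (CoxFour.chi cs j w * t ^ cs.length w) = B at *
    generalize ∑' w, t ^ cs.length w = P at *
    have h1 : (1 - t) ≠ 0 := by linarith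
    field_simp at this ⊢
    apply mul_left_cancel₀ h1
    linear_combination this
  have key := CoxFour.tsum_all cs hM ht0 h1t hs _ _ hA hB
  rw [hcard] at key
  generalize ∑' w, t ^ cs.length w = P at *
  have hmul : P * (2 * (1 - ((n : ℝ) - 1) * t) * (1 + t + t ^ 2 + t ^ 3)
          + (n : ℝ) * ((n : ℝ) - 1) * t ^ 4) = 2 * (1 + t) * (1 + t + t ^ 2 + t ^ 3) := by
    field_simp at key
    linear_combination key
  have hne : (2 * (1 - ((n : ℝ) - 1) * t) * (1 + t + t ^ 2 + t ^ 3)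
          + (n : ℝ) * ((n : ℝ) - 1) * t ^ 4) ≠ 0 := by
    intro h
    rw [h, mul_zero] at hmul
    have : 0 < 2 * (1 + t) * (1 + t + t ^ 2 + t ^ 3) := by positivity
    linarith
  rw [eq_div_iff hne, hmul]
end
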